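/- (Theorem 1.) Assume Δ = 0 and γ ≠ 4. If τ(λ,μ) ∈ G for some λ, μ ∈ K, then also τ(αλ, αμ) ∈ G, τ(βλ, βμ) ∈ G, τ(γλ, γμ) ∈ G and τ(αl·λ, αl·μ) ∈ G. (Hence the translation subgroup N := {g ∈ G : g = τ(λ,μ) for some λ,μ ∈ K} is a module over the subring of K generated by α, β, γ, αl, βm.) -/

import Mathlib

noncomputable section

variable {K : Type*} [Field K] [CharZero K]

/-- The linear functional `x ↦ c 0 * x 0 + c 1 * x 1 + c 2 * x 2` on `K³`. -/
def lf (c : Fin 3 → K) : (Fin 3 → K) →ₗ[K] K :=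
  c 0 • LinearMap.proj 0 + c 1 • LinearMap.proj 1 + c 2 • LinearMap.proj 2

/-- `s₁ : x ↦ x − (2x₁ − α x₂ − β x₃)·a₁` where `a₁ = Pi.single 0 1`. -/
def s1 (α β : K) : Module.End K (Fin 3 → K) :=
  LinearMap.id - (lf ![2, -α, -β]).smulRight (Pi.single 0 1)

/-- `s₂ : x ↦ x − (−x₁ + 2x₂ − l·x₃)·a₂`. -/
def s2 (l : K) : Module.End K (Fin 3 → K) :=
  LinearMap.id - (lf ![-1, 2, -l]).smulRight (Pi.single 1 1)

/-- `s₃ : x ↦ x − (−x₁ − m·x₂ + 2x₃)·a₃`. -/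
def s3 (m : K) : Module.End K (Fin 3 → K) :=
  LinearMap.id - (lf ![-1, -m, 2]).smulRight (Pi.single 2 1)

/-- `b = b₁ = (4−γ)a₁ + (l+2)a₂ + (m+2)a₃`, with `γ = l·m`. -/
def bvec (l m : K) : Fin 3 → K := ![4 - l * m, l + 2, m + 2]

/-- `b₂ = (2α+βm)a₁ + (4−β)a₂ + (α+2m)a₃`. -/
def b2vec (α β l m : K) : Fin 3 → K := ![2*α + β*m, 4 - β, α + 2*m]

/-- `b₃ = (2β+αl)a₁ + (β+2l)a₂ + (4−α)a₃`. -/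
def b3vec (α β l m : K) : Fin 3 → K := ![2*β + α*l, β + 2*l, 4 - α]

/-- `τ(λ,μ) : a₁ ↦ a₁ + ω·b, a₂ ↦ a₂ + λ·b, a₃ ↦ a₃ + μ·b`,
where `ω = −(λ(l+2) + μ(m+2))/(4−γ)`. -/
def tau (l m lam mu : K) : Module.End K (Fin 3 → K) :=
  LinearMap.id +
    (lf ![-(lam*(l+2) + mu*(m+2))/(4 - l*m), lam, mu]).smulRight (bvec l m)

/-- `τ` applied to a vector `(λ,μ) ∈ K²`. -/
def tauv (l m : K) (v : K × K) : Module.End K (Fin 3 → K) := tau l m v.1 v.2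

def c1 (α β : K) : K × K := (α, β)
def c2 (l : K) : K × K := (-2, l)
def c3 (m : K) : K × K := (m, -2)

/-- `z₁ : a₁ ↦ −a₁ + (2/(4−γ))·b, a₂ ↦ −a₂, a₃ ↦ −a₃`. -/
def z1 (l m : K) : Module.End K (Fin 3 → K) :=
  -LinearMap.id + (lf ![2/(4 - l*m), 0, 0]).smulRight (bvec l m)

/-- `z₂ : a₂ ↦ −a₂ + (2/(l+2))·b, a₁ ↦ −a₁, a₃ ↦ −a₃`. -/
def z2 (l m : K) : Module.End K (Fin 3 → K) :=
  -LinearMap.id + (lf ![0, 2/(l+2), 0]).smulRight (bvec l m)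

/-- `z₃ : a₃ ↦ −a₃ + (2/(m+2))·b, a₁ ↦ −a₁, a₂ ↦ −a₂`. -/
def z3 (l m : K) : Module.End K (Fin 3 → K) :=
  -LinearMap.id + (lf ![0, 0, 2/(m+2)]).smulRight (bvec l m)

/-- The linear functional `(λ,μ) ↦ c.1·λ + c.2·μ` on `K²`. -/
def lf2 (c : K × K) : (K × K) →ₗ[K] K := c.1 • LinearMap.fst K K K + c.2 • LinearMap.snd K K K

/-- `σ₁(λ,μ) = (λ,μ) − ((λ(l+2)+μ(m+2))/(4−γ))·(α,β)`. -/
def sigma1 (α β l m : K) : Module.End K (K × K) :=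
  LinearMap.id - (lf2 ((l+2)/(4 - l*m), (m+2)/(4 - l*m))).smulRight (α, β)

/-- `σ₂(λ,μ) = (λ,μ) + λ·(−2,l)`. -/
def sigma2 (l : K) : Module.End K (K × K) :=
  LinearMap.id + (LinearMap.fst K K K).smulRight ((-2 : K), l)

/-- `σ₃(λ,μ) = (λ,μ) + μ·(m,−2)`. -/
def sigma3 (m : K) : Module.End K (K × K) :=
  LinearMap.id + (LinearMap.snd K K K).smulRight (m, (-2 : K))

/-- The sequence `u_x` : `u_x(0)=0, u_x(1)=u_x(2)=1, u_x(3)=x−1,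
u_x(n+4) = (x−2)·u_x(n+2) − u_x(n)`. -/
def useq (x : K) : ℕ → K
  | 0 => 0
  | 1 => 1
  | 2 => 1
  | 3 => x - 1
  | (n+4) => (x - 2) * useq x (n+2) - useq x n

/-!
For `g ∈ G` we have `g b = b`, so conjugation by `g` turns the translation `id + f ⊗ b` into
`id + (f ∘ g⁻¹) ⊗ b`. The functionals with `f b = 0` are exactly `f = det(b, y, ·)`. At `u = b`, the
identity `det(gu, v, w) + det(u, gv, w) + det(u, v, gw) = tr g · det(u, v, w)` together with
`det(b, gy, x) = det g · det(b, y, g⁻¹x)` gives `f + det g · f ∘ g⁻¹ + f ∘ g = tr g · f`. Since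
`det g = ±1`, the translations in `G` are stable under multiplication by the trace of every element
of `G`, and the traces of `s₁s₂`, `s₁s₃`, `s₂s₃`, `s₁s₂s₃`, `s₁s₃s₂` generate `ℤ[α, β, γ, αl, βm]`.
-/

open LinearMap Module
open scoped Matrix

section Involutions

variable {M : Type*} [Monoid M]

theorem exists_inverse_mem_closure {S : Set M} (hS : ∀ s ∈ S, s * s = 1) {x : M}
    (hx : x ∈ Submonoid.closure S) : ∃ y ∈ Submonoid.closure S, x * y = 1 ∧ y * x = 1 := by
  induction hx using Submonoid.closure_induction with
  | mem s hs => exact ⟨s, Submonoid.subset_closure hs, hS s hs, hS s hs⟩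
  | one => exact ⟨1, one_mem _, one_mul 1, one_mul 1⟩
  | mul a b _ _ iha ihb =>
    obtain ⟨a', ha', haa', ha'a⟩ := iha
    obtain ⟨b', hb', hbb', hb'b⟩ := ihb
    refine ⟨b' * a', mul_mem hb' ha', ?_, ?_⟩
    · rw [mul_assoc, ← mul_assoc b, hbb', one_mul, haa']
    · rw [mul_assoc, ← mul_assoc a', ha'a, one_mul, hb'b]

end Involutions

section Multipliers

variable (R : Type*) {M : Type*} [Ring R] [AddCommGroup M] [Module R M]

/-- The largest subring of `R` over which the additive subgroup `A` of an `R`-module is a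
module: the scalars `r` with `r • A ⊆ A`. -/
def multiplierSubring (A : AddSubgroup M) : Subring R where
  carrier := {r | ∀ x ∈ A, r • x ∈ A}
  zero_mem' x _ := by simp
  one_mem' x hx := by simpa using hx
  add_mem' hr hs x hx := by simpa only [add_smul] using add_mem (hr x hx) (hs x hx)
  neg_mem' hr x hx := by simpa only [neg_smul] using neg_mem (hr x hx)
  mul_mem' hr hs x hx := by simpa only [mul_smul] using hr _ (hs x hx)

end Multipliers

section Translations

variable {R M : Type*} [Ring R] [AddCommGroup M] [Module R M]

theorem mul_transvection_mul {g h : Module.End R M} (hgh : g * h = 1) {b : M} (hb : g b = b)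
    (f : Dual R M) : g * transvection f b * h = transvection (f ∘ₗ h) b := by
  ext x
  have hx : g (h x) = x := LinearMap.congr_fun hgh x
  simp [transvection.apply, hx, hb]

/-- The functionals `f` with `f b = 0` for which the translation `x ↦ x + f x • b` lies in `G`.
The hypothesis `hG` says that the submonoid `G` of `End M` is a group. -/
def translationFunctionals (G : Submonoid (Module.End R M))
    (hG : ∀ g ∈ G, ∃ h ∈ G, g * h = 1 ∧ h * g = 1) (b : M) : AddSubgroup (Dual R M) where
  carrier := {f | f b = 0 ∧ transvection f b ∈ G}
  zero_mem' := ⟨rfl, (transvection.of_left_eq_zero (R := R) b).symm ▸ one_mem G⟩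
  add_mem' := by
    rintro f f' ⟨hf, hfG⟩ ⟨hf', hfG'⟩
    refine ⟨by rw [LinearMap.add_apply, hf, hf', add_zero], ?_⟩
    rw [← transvection.comp_of_right_eq hf]
    exact mul_mem hfG hfG'
  neg_mem' := by
    rintro f ⟨hf, hfG⟩
    obtain ⟨h, hhG, hfh, -⟩ := hG _ hfG
    have hneg : transvection (-f) b * transvection f b = 1 := by
      rw [Module.End.mul_eq_comp, transvection.comp_of_right_eq (by simp [hf])]
      simp [Module.End.one_eq_id]
    exact ⟨by simp [hf], left_inv_eq_right_inv hneg hfh ▸ hhG⟩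

theorem comp_mem_translationFunctionals {G : Submonoid (Module.End R M)}
    {hG : ∀ g ∈ G, ∃ h ∈ G, g * h = 1 ∧ h * g = 1} {b : M} (hb : ∀ g ∈ G, g b = b)
    {f : Dual R M} (hf : f ∈ translationFunctionals G hG b) {g : Module.End R M} (hg : g ∈ G) :
    f ∘ₗ g ∈ translationFunctionals G hG b := by
  obtain ⟨h, hh, -, hhg⟩ := hG g hg
  refine ⟨by rw [LinearMap.comp_apply, hb g hg, hf.1], ?_⟩
  rw [← mul_transvection_mul hhg (hb h hh)]
  exact mul_mem (mul_mem hh hf.2) hg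

end Translations

section Trace

variable {R : Type*} [CommRing R]

theorem triple_product_mulVec (A : Matrix (Fin 3) (Fin 3) R) (u v w : Fin 3 → R) :
    (A *ᵥ u) ⬝ᵥ (A *ᵥ v) ⨯₃ (A *ᵥ w) = A.det * (u ⬝ᵥ v ⨯₃ w) := by
  have hrows : Matrix.of ![A *ᵥ u, A *ᵥ v, A *ᵥ w] = Matrix.of ![u, v, w] * Aᵀ := by
    ext i j
    fin_cases i <;> simp [Matrix.mul_apply, Matrix.mulVec, dotProduct, mul_comm]
  simpa only [triple_product_eq_det, Matrix.det_mul, Matrix.det_transpose, mul_comm]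
    using! congrArg Matrix.det hrows

theorem triple_product_mulVec_add (A : Matrix (Fin 3) (Fin 3) R) (u v w : Fin 3 → R) :
    (A *ᵥ u) ⬝ᵥ v ⨯₃ w + u ⬝ᵥ (A *ᵥ v) ⨯₃ w + u ⬝ᵥ v ⨯₃ (A *ᵥ w) =
      A.trace * (u ⬝ᵥ v ⨯₃ w) := by
  simp only [cross_apply, Matrix.vec3_dotProduct, Matrix.mulVec, Matrix.trace_fin_three,
    Matrix.cons_val]
  ring

theorem exists_eq_triple_product {a b : Fin 3 → R} (hab : a ⬝ᵥ b = 1)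
    {f : Dual R (Fin 3 → R)} (hf : f b = 0) : ∃ y, ∀ x, f x = b ⬝ᵥ y ⨯₃ x := by
  obtain ⟨c, rfl⟩ := (dotProductEquiv R (Fin 3)).surjective f
  have hcb : c ⬝ᵥ b = 0 := hf
  have hc : b ⨯₃ (c ⨯₃ a) = c := by
    rw [cross_cross_eq_smul_sub_smul', dotProduct_comm b a, hab, hcb,
      one_smul, zero_smul, sub_zero]
  refine ⟨c ⨯₃ a, fun x => ?_⟩
  calc c ⬝ᵥ x = x ⬝ᵥ b ⨯₃ (c ⨯₃ a) := by rw [hc, dotProduct_comm]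
    _ = b ⬝ᵥ (c ⨯₃ a) ⨯₃ x := triple_product_permutation _ _ _

theorem comp_add_det_smul_comp_inverse {g h : Module.End R (Fin 3 → R)} (hgh : g * h = 1)
    {a b : Fin 3 → R} (hab : a ⬝ᵥ b = 1) (hb : g b = b) {f : Dual R (Fin 3 → R)} (hf : f b = 0) :
    f ∘ₗ g + LinearMap.det g • (f ∘ₗ h) + f = trace R (Fin 3 → R) g • f := by
  obtain ⟨A, rfl⟩ := Matrix.toLin'.surjective g
  obtain ⟨y, hy⟩ := exists_eq_triple_product hab hf
  refine LinearMap.ext fun x => ?_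
  have hAb : A *ᵥ b = b := hb
  have hAh : A *ᵥ h x = x := LinearMap.congr_fun hgh x
  have hdet := triple_product_mulVec A b y (h x)
  have htrace := triple_product_mulVec_add A b y x
  rw [hAb, hAh] at hdet
  rw [hAb] at htrace
  simp only [LinearMap.add_apply, LinearMap.smul_apply, LinearMap.comp_apply, hy,
    Matrix.toLin'_apply, det_toLin', Matrix.trace_toLin'_eq, smul_eq_mul]
  linear_combination htrace - hdet

theorem trace_mem_multiplierSubring {G : Submonoid (Module.End R (Fin 3 → R))}
    {hG : ∀ g ∈ G, ∃ h ∈ G, g * h = 1 ∧ h * g = 1} {a b : Fin 3 → R} (hab : a ⬝ᵥ b = 1)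
    (hb : ∀ g ∈ G, g b = b) {g : Module.End R (Fin 3 → R)} (hg : g ∈ G)
    (hdet : LinearMap.det g ∈ multiplierSubring R (translationFunctionals G hG b)) :
    trace R (Fin 3 → R) g ∈ multiplierSubring R (translationFunctionals G hG b) := by
  intro f hf
  obtain ⟨h, hh, hgh, -⟩ := hG g hg
  rw [← comp_add_det_smul_comp_inverse hgh hab (hb g hg) hf.1]
  exact add_mem (add_mem (comp_mem_translationFunctionals hb hf hg)
    (hdet _ (comp_mem_translationFunctionals hb hf hh))) hf

end Trace

section Reflections

variable {R M : Type*} [CommRing R] [AddCommGroup M] [Module R M]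

/-- `s` is a reflection `x ↦ x - f x • v` (so `f v = 2`) whose mirror `ker f` contains `b`. -/
def IsReflectionFixing (b : M) (s : Module.End R M) : Prop :=
  ∃ (v : M) (f : Dual R M), f v = 2 ∧ f b = 0 ∧ s = preReflection v f

namespace IsReflectionFixing

variable {b : M} {s : Module.End R M}

theorem mul_self (hs : IsReflectionFixing b s) : s * s = 1 := by
  obtain ⟨v, f, hv, -, rfl⟩ := hs
  exact LinearMap.ext (involutive_preReflection hv)

theorem apply_eq (hs : IsReflectionFixing b s) : s b = b := by
  obtain ⟨v, f, -, hb, rfl⟩ := hs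
  rw [preReflection_apply, hb, zero_smul, sub_zero]

theorem det_eq_neg_one [Module.Free R M] [Module.Finite R M] (hs : IsReflectionFixing b s) :
    LinearMap.det s = -1 := by
  obtain ⟨v, f, hv, -, rfl⟩ := hs
  have htrans : preReflection v f = transvection (-f) v := by
    ext x
    simp [preReflection_apply, transvection.apply, sub_eq_add_neg]
  rw [htrans, transvection.det, LinearMap.neg_apply, hv]
  norm_num

end IsReflectionFixing

theorem trace_preReflection [Module.Free R M] [Module.Finite R M] (v : M) (f : Dual R M) :
    trace R M (preReflection v f) = finrank R M - f v := by
  simp [preReflection]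

theorem trace_mul_preReflection [Module.Free R M] [Module.Finite R M] (g : Module.End R M)
    (v : M) (f : Dual R M) :
    trace R M (g * preReflection v f) = trace R M g - f (g v) := by
  have hmul : g * preReflection v f = g - f.smulRight (g v) := by
    ext x
    simp [preReflection_apply]
  rw [hmul, map_sub, trace_smulRight]

theorem trace_mem_multiplierSubring_of_mem_closure {S : Set (Module.End R (Fin 3 → R))}
    {a b : Fin 3 → R} (hab : a ⬝ᵥ b = 1) (hS : ∀ s ∈ S, IsReflectionFixing b s)
    {hG : ∀ g ∈ Submonoid.closure S, ∃ h ∈ Submonoid.closure S, g * h = 1 ∧ h * g = 1}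
    {g : Module.End R (Fin 3 → R)} (hg : g ∈ Submonoid.closure S) :
    trace R (Fin 3 → R) g ∈
      multiplierSubring R (translationFunctionals (Submonoid.closure S) hG b) := by
  set T := multiplierSubring R (translationFunctionals (Submonoid.closure S) hG b)
  have hfix : Submonoid.closure S ≤ MulAction.stabilizerSubmonoid (Module.End R (Fin 3 → R)) b :=
    Submonoid.closure_le.2 fun s hs => (hS s hs).apply_eq
  have hdet : Submonoid.closure S ≤ T.toSubmonoid.comap LinearMap.det :=
    Submonoid.closure_le.2 fun s hs => by simp [(hS s hs).det_eq_neg_one]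
  exact trace_mem_multiplierSubring hab hfix hg (hdet hg)

end Reflections

section ReflectionGroup

variable {F : Type*} [Field F]

theorem lf_apply (c x : Fin 3 → F) : lf c x = c 0 * x 0 + c 1 * x 1 + c 2 * x 2 := by
  simp [lf]

theorem lf_single (c : Fin 3 → F) (i : Fin 3) : lf c (Pi.single i 1) = c i := by
  fin_cases i <;> simp [lf]

theorem s1_eq_preReflection (α β : F) :
    s1 α β = preReflection (Pi.single 0 1) (lf ![2, -α, -β]) :=
  rfl

theorem s2_eq_preReflection (l : F) : s2 l = preReflection (Pi.single 1 1) (lf ![-1, 2, -l]) :=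
  rfl

theorem s3_eq_preReflection (m : F) : s3 m = preReflection (Pi.single 2 1) (lf ![-1, -m, 2]) :=
  rfl

theorem isReflectionFixing_s1 {α β l m : F}
    (hΔ : 8 - 2 * α - 2 * β - 2 * (l * m) - (α * l + β * m) = 0) :
    IsReflectionFixing (bvec l m) (s1 α β) := by
  refine ⟨_, _, lf_single _ _, ?_, s1_eq_preReflection α β⟩
  simp only [lf_apply, bvec, Matrix.cons_val]
  linear_combination hΔ

theorem isReflectionFixing_s2 (l m : F) : IsReflectionFixing (bvec l m) (s2 l) := by
  refine ⟨_, _, lf_single _ _, ?_, s2_eq_preReflection l⟩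
  simp only [lf_apply, bvec, Matrix.cons_val]
  ring

theorem isReflectionFixing_s3 (l m : F) : IsReflectionFixing (bvec l m) (s3 m) := by
  refine ⟨_, _, lf_single _ _, ?_, s3_eq_preReflection m⟩
  simp only [lf_apply, bvec, Matrix.cons_val]
  ring

theorem isReflectionFixing_of_mem {α β l m : F}
    (hΔ : 8 - 2 * α - 2 * β - 2 * (l * m) - (α * l + β * m) = 0) :
    ∀ s ∈ ({s1 α β, s2 l, s3 m} : Set (Module.End F (Fin 3 → F))),
      IsReflectionFixing (bvec l m) s := by
  rintro s (rfl | rfl | rfl)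
  exacts [isReflectionFixing_s1 hΔ, isReflectionFixing_s2 l m, isReflectionFixing_s3 l m]

theorem trace_s1_mul_s2 (α β l : F) : trace F (Fin 3 → F) (s1 α β * s2 l) = α - 1 := by
  rw [s2_eq_preReflection, trace_mul_preReflection, s1_eq_preReflection, trace_preReflection]
  simp only [finrank_fin_fun, Nat.cast_ofNat, preReflection_apply, map_sub, map_smul, smul_eq_mul,
    lf_single, Matrix.cons_val]
  ring

theorem trace_s1_mul_s3 (α β m : F) : trace F (Fin 3 → F) (s1 α β * s3 m) = β - 1 := by
  rw [s3_eq_preReflection, trace_mul_preReflection, s1_eq_preReflection, trace_preReflection]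
  simp only [finrank_fin_fun, Nat.cast_ofNat, preReflection_apply, map_sub, map_smul, smul_eq_mul,
    lf_single, Matrix.cons_val]
  ring

theorem trace_s2_mul_s3 (l m : F) : trace F (Fin 3 → F) (s2 l * s3 m) = l * m - 1 := by
  rw [s3_eq_preReflection, trace_mul_preReflection, s2_eq_preReflection, trace_preReflection]
  simp only [finrank_fin_fun, Nat.cast_ofNat, preReflection_apply, map_sub, map_smul, smul_eq_mul,
    lf_single, Matrix.cons_val]
  ring

theorem trace_s1_mul_s2_mul_s3 (α β l m : F) :
    trace F (Fin 3 → F) (s1 α β * s2 l * s3 m) = α * l + α + β + l * m - 3 := by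
  rw [s3_eq_preReflection, trace_mul_preReflection, trace_s1_mul_s2, s1_eq_preReflection,
    s2_eq_preReflection]
  simp only [Module.End.mul_apply, preReflection_apply, map_sub, map_smul, smul_eq_mul, lf_single,
    Matrix.cons_val]
  ring

theorem trace_s1_mul_s3_mul_s2 (α β l m : F) :
    trace F (Fin 3 → F) (s1 α β * s3 m * s2 l) = β * m + α + β + l * m - 3 := by
  rw [s2_eq_preReflection, trace_mul_preReflection, trace_s1_mul_s3, s1_eq_preReflection,
    s3_eq_preReflection]
  simp only [Module.End.mul_apply, preReflection_apply, map_sub, map_smul, smul_eq_mul, lf_single,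
    Matrix.cons_val]
  ring

/-- The group `G`. The submonoid generated by `s₁, s₂, s₃` is a group because each `sᵢ` is an
involution. -/
abbrev reflectionGroup (α β l m : F) : Submonoid (Module.End F (Fin 3 → F)) :=
  Submonoid.closure {s1 α β, s2 l, s3 m}

theorem subringClosure_le_of_trace_mem {α β l m : F} {T : Subring F}
    (htrace : ∀ g ∈ reflectionGroup α β l m, trace F (Fin 3 → F) g ∈ T) :
    Subring.closure {α, β, l * m, α * l, β * m} ≤ T := by
  have h1 : s1 α β ∈ reflectionGroup α β l m := Submonoid.subset_closure (by simp)
  have h2 : s2 l ∈ reflectionGroup α β l m := Submonoid.subset_closure (by simp)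
  have h3 : s3 m ∈ reflectionGroup α β l m := Submonoid.subset_closure (by simp)
  have hα : α ∈ T := by
    simpa [trace_s1_mul_s2] using add_mem (htrace _ (mul_mem h1 h2)) (one_mem T)
  have hβ : β ∈ T := by
    simpa [trace_s1_mul_s3] using add_mem (htrace _ (mul_mem h1 h3)) (one_mem T)
  have hlm : l * m ∈ T := by
    simpa [trace_s2_mul_s3] using add_mem (htrace _ (mul_mem h2 h3)) (one_mem T)
  have hsum : α + β + l * m - 3 ∈ T := sub_mem (add_mem (add_mem hα hβ) hlm) (ofNat_mem T 3)
  have hαl : α * l ∈ T := by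
    convert! sub_mem (htrace _ (mul_mem (mul_mem h1 h2) h3)) hsum using 1
    rw [trace_s1_mul_s2_mul_s3]
    ring
  have hβm : β * m ∈ T := by
    convert! sub_mem (htrace _ (mul_mem (mul_mem h1 h3) h2)) hsum using 1
    rw [trace_s1_mul_s3_mul_s2]
    ring
  rw [Subring.closure_le]
  rintro c (rfl | rfl | rfl | rfl | rfl)
  exacts [hα, hβ, hlm, hαl, hβm]

/-- The functional `f` with `τ(λ,μ) = id + f ⊗ b`. -/
def tauFunctional (l m lam mu : F) : Dual F (Fin 3 → F) :=
  lf ![-(lam * (l + 2) + mu * (m + 2)) / (4 - l * m), lam, mu]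

theorem tau_eq_transvection (l m lam mu : F) :
    tau l m lam mu = transvection (tauFunctional l m lam mu) (bvec l m) :=
  rfl

theorem tauFunctional_bvec {l m : F} (hγ : l * m ≠ 4) (lam mu : F) :
    tauFunctional l m lam mu (bvec l m) = 0 := by
  have h4 : 4 - l * m ≠ 0 := sub_ne_zero.mpr hγ.symm
  simp only [tauFunctional, lf_apply, bvec, Matrix.cons_val]
  field_simp
  ring

theorem smul_tauFunctional (c l m lam mu : F) :
    c • tauFunctional l m lam mu = tauFunctional l m (c * lam) (c * mu) := by
  refine LinearMap.ext fun x => ?_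
  simp only [tauFunctional, lf_apply, LinearMap.smul_apply, smul_eq_mul, Matrix.cons_val]
  ring

theorem tauFunctional_mem_iff {l m : F} (hγ : l * m ≠ 4)
    {G : Submonoid (Module.End F (Fin 3 → F))}
    {hG : ∀ g ∈ G, ∃ h ∈ G, g * h = 1 ∧ h * g = 1} {lam mu : F} :
    tauFunctional l m lam mu ∈ translationFunctionals G hG (bvec l m) ↔ tau l m lam mu ∈ G := by
  rw [tau_eq_transvection]
  exact and_iff_right (tauFunctional_bvec hγ lam mu)

theorem single_dotProduct_bvec {l m : F} (hγ : l * m ≠ 4) :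
    Pi.single 0 (4 - l * m)⁻¹ ⬝ᵥ bvec l m = 1 := by
  rw [single_dotProduct]
  exact inv_mul_cancel₀ (sub_ne_zero.mpr hγ.symm)

theorem stmt6_general {α β l m : F}
    (hΔ : 8 - 2 * α - 2 * β - 2 * (l * m) - (α * l + β * m) = 0) (hγ : l * m ≠ 4) {lam mu : F}
    (h : tau l m lam mu ∈ Submonoid.closure {s1 α β, s2 l, s3 m})
    {c : F} (hc : c ∈ Subring.closure {α, β, l * m, α * l, β * m}) :
    tau l m (c * lam) (c * mu) ∈ Submonoid.closure {s1 α β, s2 l, s3 m} := by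
  have hs := isReflectionFixing_of_mem hΔ
  have hG : ∀ g ∈ reflectionGroup α β l m, ∃ h ∈ reflectionGroup α β l m, g * h = 1 ∧ h * g = 1 :=
    fun _ => exists_inverse_mem_closure fun s hsG => (hs s hsG).mul_self
  have hT : c ∈ multiplierSubring F (translationFunctionals _ hG (bvec l m)) :=
    subringClosure_le_of_trace_mem (fun _ =>
      trace_mem_multiplierSubring_of_mem_closure (single_dotProduct_bvec hγ) hs) hc
  rw [← tauFunctional_mem_iff hγ (hG := hG)] at h ⊢
  rw [← smul_tauFunctional]
  exact hT _ h

end ReflectionGroup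

/-- Theorem 1: if `Δ = 0`, `γ ≠ 4` and `τ(λ,μ)` lies in the group `G`
generated by `s₁, s₂, s₃`, then so do `τ(αλ,αμ)`, `τ(βλ,βμ)`, `τ(γλ,γμ)` and
`τ(αl·λ, αl·μ)`.  (Since the `sᵢ` are involutions, the subgroup of `GL(M)` they
generate has the same elements as the submonoid of `End M` they generate.) -/
theorem stmt6 (α β l m : K)
    (hΔ : 8 - 2*α - 2*β - 2*(l*m) - (α*l + β*m) = 0) (hγ : l*m ≠ 4)
    (lam mu : K)
    (h : tau l m lam mu ∈ Submonoid.closure {s1 α β, s2 l, s3 m}) :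
    tau l m (α*lam) (α*mu) ∈ Submonoid.closure {s1 α β, s2 l, s3 m} ∧
    tau l m (β*lam) (β*mu) ∈ Submonoid.closure {s1 α β, s2 l, s3 m} ∧
    tau l m ((l*m)*lam) ((l*m)*mu) ∈ Submonoid.closure {s1 α β, s2 l, s3 m} ∧
    tau l m ((α*l)*lam) ((α*l)*mu) ∈ Submonoid.closure {s1 α β, s2 l, s3 m} := by
  refine ⟨?_, ?_, ?_, ?_⟩ <;>
    exact stmt6_general hΔ hγ h (Subring.subset_closure (by simp))

end
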